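/- arXiv:2306.11705 — 5 statements merged into one kernel-verified Lean document; each statement's English description precedes it below -/
import Mathlib

section
/- (Outer bound of the DI capacity region of a K-MAC.) Let W : X_1×⋯×X_K → P(Y) be a K-MAC with cost functions φ_k : X_k → [0,∞) and bounds Φ_k ≥ 0. Then the DI capacity region satisfies C_DI(W, φ, Φ) ⊆ ⋃_{p_𝐗} {R ∈ [0,∞)^K : R_k ≤ H(X_k) for all k}, where the union ranges over all joint distributions p_𝐗 of 𝐗 = (X_1,…,X_K) on X_1×⋯×X_K with E[φ_k(X_k)] ≤ Φ_k for all k, and H(X_k) is the Shannon entropy (base 2) of the k-th marginal. -/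
open scoped BigOperators

/-- A probability distribution on a finite alphabet, given as a function. -/
def IsDist {α : Type*} [Fintype α] (p : α → ℝ) : Prop :=
  (∀ x, 0 ≤ p x) ∧ ∑ x, p x = 1

open Classical in
/-- Probability of an event under a distribution on a finite alphabet. -/
noncomputable def pr {α : Type*} [Fintype α] (p : α → ℝ) (A : α → Prop) : ℝ :=
  ∑ x, if A x then p x else 0

/-- Shannon entropy, base 2 (with the convention `0 * log 0 = 0`). -/
noncomputable def H2 {α : Type*} [Fintype α] (p : α → ℝ) : ℝ :=
  ∑ x, -(p x * Real.logb 2 (p x))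

open Classical in
/-- The empirical distribution (type) of a sequence. -/
noncomputable def empDist {α : Type*} [Fintype α] {n : ℕ} (x : Fin n → α) (a : α) : ℝ :=
  ((Finset.univ.filter fun i => x i = a).card : ℝ) / (n : ℝ)

/-- `p` is an `n`-type, i.e. the empirical distribution of some length-`n` sequence. -/
def IsNType {α : Type*} [Fintype α] (n : ℕ) (p : α → ℝ) : Prop :=
  ∃ x : Fin n → α, empDist x = p

/-- Memoryless extension of a point-to-point channel. -/
noncomputable def dmcExt {X Y : Type*} (V : X → Y → ℝ) (n : ℕ)
    (x : Fin n → X) (y : Fin n → Y) : ℝ :=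
  ∏ i, V (x i) (y i)

/-- `(f, g)` is an `(M, n, lam)` deterministic-identification code for the
(block) channel `Vn`. -/
def IsDICode {X Y : Type*} [Fintype X] [Fintype Y] {n M : ℕ}
    (Vn : (Fin n → X) → (Fin n → Y) → ℝ)
    (f : Fin M → Fin n → X) (g : Fin M → (Fin n → Y) → Bool) (lam : ℝ) : Prop :=
  (∀ m, pr (Vn (f m)) (fun y => g m y = false) ≤ lam) ∧
  (∀ m m', m ≠ m' → pr (Vn (f m)) (fun y => g m' y = true) ≤ lam)

/-- Rate `R` is DI-achievable over the DMC `V` under the cost constraint `(φ, Φ)`. -/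
def dmcAchievable {X Y : Type*} [Fintype X] [Fintype Y]
    (V : X → Y → ℝ) (φ : X → ℝ) (Φ : ℝ) (R : ℝ) : Prop :=
  0 ≤ R ∧ ∀ lam > (0 : ℝ), ∃ N : ℕ, ∀ n ≥ N,
    ∃ (f : Fin ⌈(2:ℝ) ^ ((n:ℝ) * R)⌉₊ → Fin n → X)
      (g : Fin ⌈(2:ℝ) ^ ((n:ℝ) * R)⌉₊ → (Fin n → Y) → Bool),
      (∀ m, (1 / (n:ℝ)) * ∑ i, φ (f m i) ≤ Φ) ∧ IsDICode (dmcExt V n) f g lam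

/-- The DI capacity of a DMC under an input cost constraint. -/
noncomputable def CDIdmc {X Y : Type*} [Fintype X] [Fintype Y]
    (V : X → Y → ℝ) (φ : X → ℝ) (Φ : ℝ) : ℝ :=
  sSup {R | dmcAchievable V φ Φ R}

/-! ### K-input multiple-access channels -/

/-- Memoryless extension of a `K`-MAC. -/
noncomputable def macExt {K : ℕ} {X : Fin K → Type*} {Y : Type*}
    (W : (∀ k, X k) → Y → ℝ) (n : ℕ)
    (x : ∀ k, Fin n → X k) (y : Fin n → Y) : ℝ :=
  ∏ i, W (fun k => x k i) (y i)

/-- The component error probability `e_k(m'|m)` of a MAC DI code. -/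
noncomputable def macErr {K : ℕ} {X : Fin K → Type*} {Y : Type*} [Fintype Y]
    (W : (∀ k, X k) → Y → ℝ) (n : ℕ) {M : Fin K → ℕ}
    (f : ∀ k, Fin (M k) → Fin n → X k)
    (g : (∀ k, Fin (M k)) → (Fin n → Y) → Fin K → Bool)
    (k : Fin K) (m' m : ∀ j, Fin (M j)) : ℝ :=
  pr (macExt W n (fun j => f j (m j))) (fun y => g m' y k ≠ decide (m' k = m k))

/-- The average input cost constraint of a MAC code. -/
def macCost {K : ℕ} {X : Fin K → Type*} (n : ℕ) {M : Fin K → ℕ}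
    (f : ∀ k, Fin (M k) → Fin n → X k) (φ : ∀ k, X k → ℝ) (Φ : Fin K → ℝ) : Prop :=
  ∀ k, ∀ mk : Fin (M k), (1 / (n:ℝ)) * ∑ i, φ k (f k mk i) ≤ Φ k

/-- `(f, g)` is an `(M, n, φ, Φ, lam)` (maximal-error) DI code for the `K`-MAC `W`. -/
def IsMACDICode {K : ℕ} {X : Fin K → Type*} {Y : Type*} [Fintype Y]
    (W : (∀ k, X k) → Y → ℝ) (n : ℕ) {M : Fin K → ℕ}
    (f : ∀ k, Fin (M k) → Fin n → X k)
    (g : (∀ k, Fin (M k)) → (Fin n → Y) → Fin K → Bool)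
    (φ : ∀ k, X k → ℝ) (Φ : Fin K → ℝ) (lam : ℝ) : Prop :=
  macCost n f φ Φ ∧ ∀ k (m m' : ∀ j, Fin (M j)), macErr W n f g k m' m ≤ lam

/-- A rate tuple is DI-achievable over the `K`-MAC `W` under cost constraints `(φ, Φ)`. -/
def macAchievable {K : ℕ} {X : Fin K → Type*} {Y : Type*} [Fintype Y]
    (W : (∀ k, X k) → Y → ℝ) (φ : ∀ k, X k → ℝ) (Φ : Fin K → ℝ)
    (R : Fin K → ℝ) : Prop :=
  (∀ k, 0 ≤ R k) ∧ ∀ lam > (0 : ℝ), ∃ N : ℕ, ∀ n ≥ N,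
    ∃ (f : ∀ k, Fin ⌈(2:ℝ) ^ ((n:ℝ) * R k)⌉₊ → Fin n → X k)
      (g : (∀ k, Fin ⌈(2:ℝ) ^ ((n:ℝ) * R k)⌉₊) → (Fin n → Y) → Fin K → Bool),
      IsMACDICode W n f g φ Φ lam

/-- The (maximal-error) DI capacity region of a `K`-MAC:
the closure of the set of achievable rate tuples. -/
def CDImac {K : ℕ} {X : Fin K → Type*} {Y : Type*} [Fintype Y]
    (W : (∀ k, X k) → Y → ℝ) (φ : ∀ k, X k → ℝ) (Φ : Fin K → ℝ) :
    Set (Fin K → ℝ) :=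
  closure {R | macAchievable W φ Φ R}

open Classical in
/-- The average false-identification error probability `ē_k(m')` of a MAC code:
the average of `e_k(m'|m)` over `m` with `m_k` uniform on `[M_k] ∖ {m'_k}` and
`m_j` uniform on `[M_j]` for `j ≠ k`. -/
noncomputable def macAvgErr {K : ℕ} {X : Fin K → Type*} {Y : Type*} [Fintype Y]
    (W : (∀ k, X k) → Y → ℝ) (n : ℕ) {M : Fin K → ℕ}
    (f : ∀ k, Fin (M k) → Fin n → X k)
    (g : (∀ k, Fin (M k)) → (Fin n → Y) → Fin K → Bool)
    (k : Fin K) (m' : ∀ j, Fin (M j)) : ℝ :=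
  (∑ m ∈ Finset.univ.filter (fun m : ∀ j, Fin (M j) => m k ≠ m' k),
      macErr W n f g k m' m) /
    (((M k : ℝ) - 1) * ∏ j ∈ Finset.univ.erase k, (M j : ℝ))

/-- `(f, g)` is an `(M, n, φ, Φ, lam)` average-error DI (DIA) code for the `K`-MAC `W`. -/
def IsMACDIACode {K : ℕ} {X : Fin K → Type*} {Y : Type*} [Fintype Y]
    (W : (∀ k, X k) → Y → ℝ) (n : ℕ) {M : Fin K → ℕ}
    (f : ∀ k, Fin (M k) → Fin n → X k)
    (g : (∀ k, Fin (M k)) → (Fin n → Y) → Fin K → Bool)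
    (φ : ∀ k, X k → ℝ) (Φ : Fin K → ℝ) (lam : ℝ) : Prop :=
  macCost n f φ Φ ∧
  (∀ k (m : ∀ j, Fin (M j)), macErr W n f g k m m ≤ lam) ∧
  (∀ k (m' : ∀ j, Fin (M j)), macAvgErr W n f g k m' ≤ lam)

open Classical in
/-- `(f, g)` is an `(M, n, φ, Φ, lam)` average-error DI (DIA) code for the DMC `V`. -/
def IsDMCDIACode {X Y : Type*} [Fintype X] [Fintype Y] {n M : ℕ}
    (V : X → Y → ℝ) (f : Fin M → Fin n → X) (g : Fin M → (Fin n → Y) → Bool)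
    (φ : X → ℝ) (Φ lam : ℝ) : Prop :=
  (∀ m, (1 / (n:ℝ)) * ∑ i, φ (f m i) ≤ Φ) ∧
  (∀ m, pr (dmcExt V n (f m)) (fun y => g m y = false) ≤ lam) ∧
  (∀ m' : Fin M, (∑ m ∈ Finset.univ.filter (fun m => m ≠ m'),
      pr (dmcExt V n (f m)) (fun y => g m' y = true)) / ((M : ℝ) - 1) ≤ lam)

/-! ### Joint distributions of `(X, X', S, Y)`, the set `Q`, and mutual information -/

section Joint

variable {A S Y : Type*} [Fintype A] [Fintype S] [Fintype Y]

noncomputable def margX (q : A × A × S × Y → ℝ) (a : A) : ℝ :=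
  ∑ a', ∑ s, ∑ y, q (a, a', s, y)

noncomputable def margX' (q : A × A × S × Y → ℝ) (a' : A) : ℝ :=
  ∑ a, ∑ s, ∑ y, q (a, a', s, y)

noncomputable def margS (q : A × A × S × Y → ℝ) (s : S) : ℝ :=
  ∑ a, ∑ a', ∑ y, q (a, a', s, y)

noncomputable def margXY (q : A × A × S × Y → ℝ) (a : A) (y : Y) : ℝ :=
  ∑ a', ∑ s, q (a, a', s, y)

noncomputable def margX'Y (q : A × A × S × Y → ℝ) (a' : A) (y : Y) : ℝ :=
  ∑ a, ∑ s, q (a, a', s, y)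

noncomputable def margXX' (q : A × A × S × Y → ℝ) (a a' : A) : ℝ :=
  ∑ s, ∑ y, q (a, a', s, y)

noncomputable def margXX'Y (q : A × A × S × Y → ℝ) (a a' : A) (y : Y) : ℝ :=
  ∑ s, q (a, a', s, y)

noncomputable def margXSY (q : A × A × S × Y → ℝ) : A × S × Y → ℝ :=
  fun t => ∑ a', q (t.1, a', t.2.1, t.2.2)

noncomputable def margXX'S (q : A × A × S × Y → ℝ) : A × A × S → ℝ :=
  fun t => ∑ y, q (t.1, t.2.1, t.2.2, y)

noncomputable def margX'SY (q : A × A × S × Y → ℝ) : A × S × Y → ℝ :=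
  fun t => ∑ a, q (a, t.1, t.2.1, t.2.2)

noncomputable def margX'S (q : A × A × S × Y → ℝ) : A × S → ℝ :=
  fun t => ∑ a, ∑ y, q (a, t.1, t.2, y)

/-- The mutual information `I(X'; X, S, Y)` of a joint distribution of `(X, X', S, Y)`. -/
noncomputable def infoX' (q : A × A × S × Y → ℝ) : ℝ :=
  H2 (margX' q) + H2 (margXSY q) - H2 q

/-- The conditional mutual information `I(X; Y | X', S)`. -/
noncomputable def condMIXY (q : A × A × S × Y → ℝ) : ℝ :=
  H2 (margXX'S q) + H2 (margX'SY q) - H2 q - H2 (margX'S q)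

/-- The set `Q(P, P_S, W)` of joint distributions of `(X, X', S, Y)` such that the
`S`-marginal lies in `P_S`, `p_{Y|X} = p_S W`, `p_{Y|X'} = p_{S'} W` for some
`p_{S'} ∈ P_S`, both `X`- and `X'`-marginals equal `P`, and `X − X' − Y` is a
Markov chain. -/
def QSet (P : A → ℝ) (PS : Set (S → ℝ)) (W : A → S → Y → ℝ) :
    Set (A × A × S × Y → ℝ) :=
  { q | IsDist q ∧ margS q ∈ PS ∧
    (∀ a y, margXY q a y = margX q a * ∑ s, margS q s * W a s y) ∧
    (∃ pS' ∈ PS, ∀ a y, margX'Y q a y = margX' q a * ∑ s, pS' s * W a s y) ∧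
    margX q = P ∧ margX' q = P ∧
    (∀ a a' y, margXX'Y q a a' y * margX' q a' = margXX' q a a' * margX'Y q a' y) }

/-- The set `Q_δ(P, P_S, W)`: as `QSet`, but with the Markov-chain condition replaced by
`I(X; Y | X', S) ≤ δ`. -/
def QdSet (P : A → ℝ) (PS : Set (S → ℝ)) (W : A → S → Y → ℝ) (δ : ℝ) :
    Set (A × A × S × Y → ℝ) :=
  { q | IsDist q ∧ margS q ∈ PS ∧
    (∀ a y, margXY q a y = margX q a * ∑ s, margS q s * W a s y) ∧
    (∃ pS' ∈ PS, ∀ a y, margX'Y q a y = margX' q a * ∑ s, pS' s * W a s y) ∧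
    margX q = P ∧ margX' q = P ∧
    condMIXY q ≤ δ }

/-- `min_{q ∈ Qs} I(X'; X, S, Y)`. -/
noncomputable def minInfoX' (Qs : Set (A × A × S × Y → ℝ)) : ℝ :=
  sInf (infoX' '' Qs)

end Joint

/-! ### Viewing one sender of a `K`-MAC as input, the others as state -/

/-- Combine an input `a : X k` with inputs of all other senders into a full input tuple. -/
def insertAt {K : ℕ} {X : Fin K → Type*} (k : Fin K) (a : X k)
    (s : ∀ j : {j : Fin K // j ≠ k}, X j.val) (j : Fin K) : X j :=
  if h : j = k then cast (congrArg X h).symm a else s ⟨j, h⟩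

/-- Marginal distribution of the `k`-th component. -/
noncomputable def margKth {K : ℕ} {X : Fin K → Type*} [∀ k, Fintype (X k)]
    (p : (∀ k, X k) → ℝ) (k : Fin K) (a : X k) : ℝ :=
  ∑ s : ∀ j : {j : Fin K // j ≠ k}, X j.val, p (insertAt k a s)

/-- Marginal distribution of all components except the `k`-th, i.e. of `S_k`. -/
noncomputable def margRest {K : ℕ} {X : Fin K → Type*} [∀ k, Fintype (X k)]
    (p : (∀ k, X k) → ℝ) (k : Fin K)
    (s : ∀ j : {j : Fin K // j ≠ k}, X j.val) : ℝ :=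
  ∑ a : X k, p (insertAt k a s)

/-- The `K`-MAC viewed as a point-to-point channel with input `X k` and state `S_k`. -/
def partialW {K : ℕ} {X : Fin K → Type*} {Y : Type*}
    (W : (∀ k, X k) → Y → ℝ) (k : Fin K) (a : X k)
    (s : ∀ j : {j : Fin K // j ≠ k}, X j.val) (y : Y) : ℝ :=
  W (insertAt k a s) y

/-- Mutual information `I(X, S; X')` of a joint distribution on `X × X × S`. -/
noncomputable def miXSX' {X S : Type*} [Fintype X] [Fintype S]
    (pj : X × X × S → ℝ) : ℝ :=
  H2 (fun t : X × S => ∑ a', pj (t.1, a', t.2)) +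
    H2 (fun a' : X => ∑ a, ∑ s, pj (a, a', s)) - H2 pj


lemma emp_avg {A : Type} [Fintype A] {n M : ℕ} (f : Fin M → Fin n → A) :
    ∃ c : A → ℝ, (∀ a, 0 ≤ c a) ∧ (∀ m i, 1 ≤ c (f m i)) ∧
      ∀ F : A → ℝ, ∑ a, c a * F a = ∑ m, ∑ i, F (f m i) := by
  classical
  refine ⟨fun a => ∑ m, ∑ i, if f m i = a then 1 else 0, ?_, ?_, ?_⟩
  · intro a
    exact Finset.sum_nonneg fun m _ => Finset.sum_nonneg fun i _ => by split_ifs <;> norm_num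
  · intro m i
    have h1 : (1:ℝ) ≤ ∑ i', if f m i' = f m i then (1:ℝ) else 0 := by
      have := Finset.single_le_sum (f := fun i' => if f m i' = f m i then (1:ℝ) else 0)
        (s := Finset.univ) (fun i _ => by split_ifs <;> norm_num) (Finset.mem_univ i)
      simpa using this
    refine h1.trans ?_
    exact Finset.single_le_sum (f := fun m' => ∑ i', if f m' i' = f m i then (1:ℝ) else 0)
        (s := Finset.univ) (fun m _ => Finset.sum_nonneg fun i _ => by split_ifs <;> norm_num)
        (Finset.mem_univ m)
  · intro F
    simp only [Finset.sum_mul]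
    rw [Finset.sum_comm]
    refine Finset.sum_congr rfl fun m _ => ?_
    rw [Finset.sum_comm]
    refine Finset.sum_congr rfl fun i _ => ?_
    simp

lemma code_bound {A : Type} [Fintype A] {n M : ℕ} (hn : 0 < n) (hM : 0 < M)
    (f : Fin M → Fin n → A) (hf : Function.Injective f) (φ : A → ℝ) (Φ : ℝ)
    (hc : ∀ m, (1 / (n:ℝ)) * ∑ i, φ (f m i) ≤ Φ) :
    ∃ P : A → ℝ, IsDist P ∧ ∑ a, P a * φ a ≤ Φ ∧ Real.logb 2 M ≤ n * H2 P := by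
  classical
  obtain ⟨c, hc0, hc1, hcF⟩ := emp_avg f
  have hn' : (0:ℝ) < n := by exact_mod_cast hn
  have hM' : (0:ℝ) < M := by exact_mod_cast hM
  have hF : ∀ F : A → ℝ, ∑ a, c a / (M * n) * F a = (∑ m, ∑ i, F (f m i)) / (M * n) := by
    intro F
    rw [← hcF, Finset.sum_div]
    exact Finset.sum_congr rfl fun a _ => by ring
  set P : A → ℝ := fun a => c a / (M * n) with hP
  have hP0 : ∀ a, 0 ≤ P a := fun a => div_nonneg (hc0 a) (by positivity)
  have hPpos : ∀ m i, 0 < P (f m i) := fun m i =>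
    div_pos (lt_of_lt_of_le one_pos (hc1 m i)) (by positivity)
  have hPsum : ∑ a, P a = 1 := by
    have := hF (fun _ => 1)
    simp only [mul_one] at this
    rw [this]
    simp [hM'.ne', hn'.ne']
  refine ⟨P, ⟨hP0, hPsum⟩, ?_, ?_⟩
  · rw [hF φ, div_le_iff₀ (by positivity)]
    have : ∀ m, ∑ i, φ (f m i) ≤ Φ * n := fun m => by
      have := hc m
      rwa [one_div, inv_mul_le_iff₀ hn', mul_comm] at this
    calc ∑ m, ∑ i, φ (f m i) ≤ ∑ m : Fin M, Φ * n := Finset.sum_le_sum fun m _ => this m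
      _ = Φ * (M * n) := by simp; ring
  · have hq : ∑ m, ∏ i, P (f m i) ≤ 1 := by
      calc ∑ m, ∏ i, P (f m i) = ∑ x ∈ Finset.univ.image f, ∏ i, P (x i) := by
            rw [Finset.sum_image (fun a _ b _ h => hf h)]
        _ ≤ ∑ x : Fin n → A, ∏ i, P (x i) :=
            Finset.sum_le_sum_of_subset_of_nonneg (Finset.subset_univ _)
              (fun x _ _ => Finset.prod_nonneg fun i _ => hP0 _)
        _ = 1 := by rw [← Fintype.sum_pow, hPsum, one_pow]
    have hlog : ∀ m, Real.log M + ∑ i, Real.log (P (f m i)) ≤ M * ∏ i, P (f m i) - 1 := by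
      intro m
      have hpos : 0 < ∏ i, P (f m i) := Finset.prod_pos fun i _ => hPpos m i
      rw [← Real.log_prod (fun i _ => (hPpos m i).ne'), ← Real.log_mul hM'.ne' hpos.ne']
      exact Real.log_le_sub_one_of_pos (by positivity)
    have hsum := Finset.sum_le_sum fun m (_ : m ∈ (Finset.univ : Finset (Fin M))) => hlog m
    rw [Finset.sum_add_distrib, Finset.sum_sub_distrib, ← Finset.mul_sum] at hsum
    simp only [Finset.sum_const, Finset.card_univ, Fintype.card_fin, nsmul_eq_mul, mul_one] at hsum
    have h2 : (M:ℝ) * Real.log M ≤ - ∑ m, ∑ i, Real.log (P (f m i)) := by nlinarith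
    have hH : H2 P = (- ((∑ m, ∑ i, Real.log (P (f m i))) / (M * n))) / Real.log 2 := by
      rw [← hF (fun a => Real.log (P a)), ← Finset.sum_neg_distrib, Finset.sum_div]
      refine Finset.sum_congr rfl fun a _ => ?_
      simp only [Real.logb]
      ring
    have hl2 : 0 < Real.log 2 := Real.log_pos (by norm_num)
    rw [hH, Real.logb, ← mul_div_assoc]
    refine div_le_div_of_nonneg_right ?_ hl2.le
    have h3 : (n:ℝ) * -((∑ m, ∑ i, Real.log (P (f m i))) / (M * n))
        = (- ∑ m, ∑ i, Real.log (P (f m i))) / M := by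
      field_simp
    rw [h3, le_div_iff₀ hM']
    linarith

lemma sum_macExt {K : ℕ} {X : Fin K → Type} {Y : Type} [Fintype Y]
    (W : (∀ k, X k) → Y → ℝ) (hW : ∀ x, IsDist (W x)) (n : ℕ) (x : ∀ k, Fin n → X k) :
    ∑ y, macExt W n x y = 1 := by
  unfold macExt
  rw [← Fintype.prod_sum]
  exact Finset.prod_eq_one fun i _ => (hW _).2

lemma pr_compl {α : Type} [Fintype α] (p : α → ℝ) (A B : α → Prop)
    (h : ∀ x, B x ↔ ¬ A x) : pr p A + pr p B = ∑ x, p x := by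
  unfold pr
  rw [← Finset.sum_add_distrib]
  refine Finset.sum_congr rfl fun x _ => ?_
  have := h x
  by_cases hA : A x <;> by_cases hB : B x <;> simp_all

lemma code_inj {K : ℕ} {X : Fin K → Type} {Y : Type} [Fintype Y]
    (W : (∀ k, X k) → Y → ℝ) (hW : ∀ x, IsDist (W x)) (n : ℕ) {M : Fin K → ℕ}
    (hM : ∀ k, 0 < M k)
    (f : ∀ k, Fin (M k) → Fin n → X k)
    (g : (∀ k, Fin (M k)) → (Fin n → Y) → Fin K → Bool)
    (h : ∀ k (m m' : ∀ j, Fin (M j)), macErr W n f g k m' m ≤ 1 / 3) (k : Fin K) :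
    Function.Injective (f k) := by
  classical
  intro a b hab
  by_contra hne
  let m : ∀ j, Fin (M j) := Function.update (fun j => ⟨0, hM j⟩) k a
  let m' : ∀ j, Fin (M j) := Function.update (fun j => ⟨0, hM j⟩) k b
  have hmk : m k = a := by simp [m]
  have hmk' : m' k = b := by simp [m']
  have hff : (fun j => f j (m' j)) = (fun j => f j (m j)) := by
    funext j
    by_cases hj : j = k
    · subst hj; rw [hmk, hmk', hab]
    · simp [m, m', hj]
  have h1 := h k m m
  have h2 := h k m' m
  unfold macErr at h1 h2
  rw [hff] at h2
  have h3 := sum_macExt W hW n (fun j => f j (m j))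
  have h4 := (pr_compl _ _ _ (fun y => by
    rw [hmk, hmk']
    cases g m y k <;> simp [hne])).symm.trans_le (add_le_add h1 h2)
  rw [h3] at h4
  norm_num at h4

lemma continuous_H2 {A : Type} [Fintype A] : Continuous (H2 : (A → ℝ) → ℝ) := by
  unfold H2
  refine continuous_finsetSum _ fun a _ => ?_
  have : (fun p : A → ℝ => -(p a * Real.logb 2 (p a)))
      = fun p => -((fun x => x * Real.log x) (p a) / Real.log 2) := by
    funext p; simp [Real.logb, mul_div_assoc]
  rw [this]
  exact ((Real.continuous_mul_log.comp (continuous_apply a)).div_const _).neg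

lemma exists_max {A : Type} [Fintype A] (φ : A → ℝ) (Φ : ℝ)
    (hne : ∃ P : A → ℝ, IsDist P ∧ ∑ a, P a * φ a ≤ Φ) :
    ∃ P : A → ℝ, (IsDist P ∧ ∑ a, P a * φ a ≤ Φ) ∧
      ∀ Q : A → ℝ, IsDist Q → ∑ a, Q a * φ a ≤ Φ → H2 Q ≤ H2 P := by
  have hS : IsCompact (stdSimplex ℝ A ∩ {P : A → ℝ | ∑ a, P a * φ a ≤ Φ}) :=
    (isCompact_stdSimplex ℝ A).inter_right (isClosed_le (by fun_prop) continuous_const)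
  obtain ⟨P, hP, hmax⟩ := hS.exists_isMaxOn hne continuous_H2.continuousOn
  exact ⟨P, hP, fun Q h1 h2 => hmax ⟨h1, h2⟩⟩

lemma prod_dist {K : ℕ} {X : Fin K → Type} [∀ k, Fintype (X k)]
    (P : ∀ k, X k → ℝ) (hP : ∀ k, IsDist (P k)) :
    IsDist (fun x : ∀ k, X k => ∏ j, P j (x j)) := by
  refine ⟨fun x => Finset.prod_nonneg fun j _ => (hP j).1 _, ?_⟩
  rw [← Fintype.prod_sum]
  exact Finset.prod_eq_one fun j _ => (hP j).2

lemma prod_cost {K : ℕ} {X : Fin K → Type} [∀ k, Fintype (X k)]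
    (P : ∀ k, X k → ℝ) (hP : ∀ k, IsDist (P k)) (φ : ∀ k, X k → ℝ) (k : Fin K) :
    ∑ x : ∀ k, X k, (∏ j, P j (x j)) * φ k (x k) = ∑ a, P k a * φ k a := by
  have : ∀ x : ∀ k, X k, (∏ j, P j (x j)) * φ k (x k)
      = ∏ j, (fun j a => P j a * if j = k then φ j a else 1) j (x j) := by
    intro x
    simp only [Finset.prod_mul_distrib]
    simp
  rw [Finset.sum_congr rfl fun x _ => this x]
  rw [← Fintype.prod_sum (fun j a => P j a * if j = k then φ j a else 1),
    Finset.prod_eq_single k]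
  · simp
  · intro j _ hj
    simp [hj, (hP j).2]
  · simp

lemma prod_marg {K : ℕ} {X : Fin K → Type} [∀ k, Fintype (X k)]
    (P : ∀ k, X k → ℝ) (hP : ∀ k, IsDist (P k)) (k : Fin K) :
    margKth (fun x : ∀ k, X k => ∏ j, P j (x j)) k = P k := by
  funext a
  unfold margKth
  have : ∀ s : ∀ j : {j : Fin K // j ≠ k}, X j.val, ∏ j, P j (insertAt k a s j)
      = P k a * ∏ j : {j : Fin K // j ≠ k}, P j.val (s j) := by
    intro s
    rw [Fintype.prod_eq_mul_prod_subtype_ne _ k]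
    congr 1
    · simp [insertAt]
    · refine Finset.prod_congr rfl fun j _ => ?_
      simp [insertAt, j.2]
  simp_rw [this]
  rw [← Finset.mul_sum, ← Fintype.prod_sum]
  rw [Finset.prod_eq_one fun j _ => (hP _).2, mul_one]

lemma achievable_bound {K : ℕ} {X : Fin K → Type} [∀ k, Fintype (X k)] {Y : Type} [Fintype Y]
    (W : (∀ k, X k) → Y → ℝ) (hW : ∀ x, IsDist (W x))
    (φ : ∀ k, X k → ℝ) (Φ : Fin K → ℝ) (R : Fin K → ℝ) (hR : macAchievable W φ Φ R)
    (k : Fin K) :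
    ∃ P : X k → ℝ, IsDist P ∧ ∑ a, P a * φ k a ≤ Φ k ∧ R k ≤ H2 P := by
  obtain ⟨N, hN⟩ := hR.2 (1 / 3) (by norm_num)
  obtain ⟨f, g, hcost, herr⟩ := hN (N + 1) (Nat.le_succ N)
  have hM : ∀ k, 0 < ⌈(2:ℝ) ^ (((N + 1 : ℕ):ℝ) * R k)⌉₊ := fun k =>
    Nat.ceil_pos.2 (by positivity)
  obtain ⟨P, h1, h2, h3⟩ := code_bound (Nat.succ_pos N) (hM k) (f k)
    (code_inj W hW _ hM f g herr k) (φ k) (Φ k) (hcost k)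
  refine ⟨P, h1, h2, ?_⟩
  have h4 : ((N + 1 : ℕ):ℝ) * R k ≤ ((N + 1 : ℕ):ℝ) * H2 P := by
    refine le_trans ?_ h3
    rw [Real.le_logb_iff_rpow_le (by norm_num) (by exact_mod_cast hM k)]
    exact Nat.le_ceil _
  exact le_of_mul_le_mul_left h4 (by positivity)

/-- Outer bound of the DI capacity region of a `K`-MAC: every point of the
capacity region has, for some input distribution satisfying the expected-cost constraints,
all component rates bounded by the corresponding marginal entropies. -/
theorem mac_DI_outer_bound
    {K : ℕ} {X : Fin K → Type} [∀ k, Fintype (X k)] {Y : Type} [Fintype Y]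
    (W : (∀ k, X k) → Y → ℝ) (hW : ∀ x, IsDist (W x))
    (φ : ∀ k, X k → ℝ) (hφ : ∀ k x, 0 ≤ φ k x)
    (Φ : Fin K → ℝ) (hΦ : ∀ k, 0 ≤ Φ k) :
    CDImac W φ Φ ⊆
      { R : Fin K → ℝ | ∃ p : (∀ k, X k) → ℝ, IsDist p ∧
          (∀ k, ∑ x, p x * φ k (x k) ≤ Φ k) ∧
          ∀ k, 0 ≤ R k ∧ R k ≤ H2 (margKth p k) } := by
  intro R hR
  have hne : ∃ R', macAchievable W φ Φ R' := by
    have := closure_nonempty_iff.1 ⟨R, hR⟩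
    exact this
  obtain ⟨R', hR'⟩ := hne
  have hex : ∀ k, ∃ P : X k → ℝ, (IsDist P ∧ ∑ a, P a * φ k a ≤ Φ k) ∧
      ∀ Q : X k → ℝ, IsDist Q → ∑ a, Q a * φ k a ≤ Φ k → H2 Q ≤ H2 P := fun k => by
    obtain ⟨P, h1, h2, _⟩ := achievable_bound W hW φ Φ R' hR' k
    exact exists_max (φ k) (Φ k) ⟨P, h1, h2⟩
  choose P hP hmax using hex
  refine ⟨fun x => ∏ j, P j (x j), prod_dist P fun k => (hP k).1, fun k => ?_, fun k => ?_⟩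
  · rw [prod_cost P (fun k => (hP k).1) φ k]
    exact (hP k).2
  · rw [prod_marg P (fun k => (hP k).1) k]
    have hcl : IsClosed {R : Fin K → ℝ | 0 ≤ R k ∧ R k ≤ H2 (P k)} :=
      (isClosed_le continuous_const (continuous_apply k)).inter
        (isClosed_le (continuous_apply k) continuous_const)
    have hsub : {R | macAchievable W φ Φ R} ⊆ {R : Fin K → ℝ | 0 ≤ R k ∧ R k ≤ H2 (P k)} := by
      intro S hS
      obtain ⟨Q, h1, h2, h3⟩ := achievable_bound W hW φ Φ S hS k
      exact ⟨hS.1 k, h3.trans (hmax k Q h1 h2)⟩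
    exact closure_minimal hsub hcl hR
end

section
/- Let W : X×S → P(Y) be a channel with finite alphabets, P a probability distribution on X, and p_S a probability distribution on S such that no output distribution p_S W(·|x), x ∈ X, is a convex combination of the distributions {p_S W(·|x′) : x′ ∈ X, x′ ≠ x} (in particular the averaged channel p_S W is injective). Then every element of Q(P, {p_S}, W) satisfies Pr[X′ = X] = 1, and consequently min_{p ∈ Q(P, {p_S}, W)} I(X′; X, S, Y) = H(P). -/
open scoped BigOperators

section Helpers
variable {A S Y : Type} [Fintype A] [Fintype S] [Fintype Y]

lemma margXX'_nonneg {q : A × A × S × Y → ℝ} (hq : ∀ t, 0 ≤ q t) (a a' : A) :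
    0 ≤ margXX' q a a' :=
  Finset.sum_nonneg fun _ _ => Finset.sum_nonneg fun _ _ => hq _

lemma QSet_diag
    (W : A → S → Y → ℝ) (P : A → ℝ) (pS : S → ℝ)
    (hconv : ∀ (a : A) (μ : A → ℝ), (∀ a', 0 ≤ μ a') → μ a = 0 → ∑ a', μ a' = 1 →
      (fun y : Y => ∑ s, pS s * W a s y) ≠
        (fun y : Y => ∑ a', μ a' * ∑ s, pS s * W a' s y))
    (q : A × A × S × Y → ℝ) (hq : q ∈ QSet P {pS} W) (a : A) :
    margXX' q a a = P a := by
  classical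
  obtain ⟨⟨hq0, -⟩, hS, hXY, ⟨pS', hpS', hX'Y⟩, hX, hX', hM⟩ := hq
  rw [Set.mem_singleton_iff] at hS hpS'
  subst hpS'
  rw [hS, hX] at hXY
  rw [hX'] at hX'Y hM
  have hr0 := margXX'_nonneg hq0
  have hsum : ∑ a', margXX' q a a' = P a := by rw [← hX]; rfl
  have hfac : ∀ a' y, margXX'Y q a a' y = margXX' q a a' * ∑ s, pS' s * W a' s y := by
    intro a' y
    by_cases h : P a' = 0
    · have h1 : ∑ b, margXX' q b a' = 0 := by rw [← h, ← hX']; rfl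
      have h2 : margXX' q a a' = 0 :=
        (Finset.sum_eq_zero_iff_of_nonneg (fun b _ => hr0 b a')).1 h1 a (Finset.mem_univ _)
      have h3 : ∀ s y, q (a, a', s, y) = 0 := by
        intro s y
        have h4 := (Finset.sum_eq_zero_iff_of_nonneg
          (fun s _ => Finset.sum_nonneg fun y _ => hq0 (a, a', s, y))).1 h2 s (Finset.mem_univ _)
        exact (Finset.sum_eq_zero_iff_of_nonneg (fun y _ => hq0 (a, a', s, y))).1 h4 y
          (Finset.mem_univ _)
      rw [h2, zero_mul]
      exact Finset.sum_eq_zero fun s _ => h3 s y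
    · have := hM a a' y
      rw [hX'Y] at this
      apply mul_right_cancel₀ h
      rw [this]; ring
  have hmix : ∀ y, P a * ∑ s, pS' s * W a s y
      = ∑ a', margXX' q a a' * ∑ s, pS' s * W a' s y := by
    intro y
    rw [← hXY]
    exact Finset.sum_congr rfl fun a' _ => hfac a' y
  by_contra hne
  have hsplit := Finset.add_sum_erase Finset.univ (fun a' => margXX' q a a') (Finset.mem_univ a)
  simp only [hsum] at hsplit
  have hd : P a - margXX' q a a ≠ 0 := fun h => hne (by linarith)
  have hdn : 0 ≤ P a - margXX' q a a := by
    have : 0 ≤ ∑ a' ∈ Finset.univ.erase a, margXX' q a a' :=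
      Finset.sum_nonneg fun a' _ => hr0 a a'
    linarith
  have key : ∀ f : A → ℝ, ∑ a', (if a' = a then 0 else
      margXX' q a a' / (P a - margXX' q a a)) * f a'
      = (∑ a' ∈ Finset.univ.erase a, margXX' q a a' * f a') / (P a - margXX' q a a) := by
    intro f
    rw [← Finset.add_sum_erase Finset.univ _ (Finset.mem_univ a), Finset.sum_div]
    simp only [if_true, zero_mul, zero_add]
    refine Finset.sum_congr rfl fun a' ha' => ?_
    rw [if_neg (Finset.ne_of_mem_erase ha')]; ring
  refine hconv a (fun a' => if a' = a then 0 else margXX' q a a' / (P a - margXX' q a a))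
    ?_ (if_pos rfl) ?_ ?_
  · intro a'
    split_ifs
    · exact le_rfl
    · exact div_nonneg (hr0 _ _) hdn
  · have := key (fun _ => 1)
    simp only [mul_one] at this
    rw [this, div_eq_one_iff_eq hd]
    linarith
  · funext y
    rw [key (fun a' => ∑ s, pS' s * W a' s y), eq_div_iff hd]
    have h1 := hmix y
    rw [← Finset.add_sum_erase Finset.univ _ (Finset.mem_univ a)] at h1
    linarith

lemma QSet_info (P : A → ℝ) (q : A × A × S × Y → ℝ) (hq0 : ∀ t, 0 ≤ q t)
    (hX : margX q = P) (hX' : margX' q = P)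
    (hdiag : ∀ a, margXX' q a a = P a) : infoX' q = H2 P := by
  classical
  have hoff : ∀ a a' s y, a' ≠ a → q (a, a', s, y) = 0 := by
    intro a a' s y hne
    have hsum : ∑ a', margXX' q a a' = P a := by rw [← hX]; rfl
    have hsplit := Finset.add_sum_erase Finset.univ (fun a' => margXX' q a a') (Finset.mem_univ a)
    simp only [hsum, hdiag] at hsplit
    have h0 : ∑ a' ∈ Finset.univ.erase a, margXX' q a a' = 0 := by linarith
    have h2 : margXX' q a a' = 0 :=
      (Finset.sum_eq_zero_iff_of_nonneg (fun b _ => margXX'_nonneg hq0 a b)).1 h0 a'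
        (Finset.mem_erase.2 ⟨hne, Finset.mem_univ _⟩)
    have h4 := (Finset.sum_eq_zero_iff_of_nonneg
      (fun s _ => Finset.sum_nonneg fun y _ => hq0 (a, a', s, y))).1 h2 s (Finset.mem_univ _)
    exact (Finset.sum_eq_zero_iff_of_nonneg (fun y _ => hq0 (a, a', s, y))).1 h4 y
      (Finset.mem_univ _)
  have hm : ∀ t : A × S × Y, margXSY q t = q (t.1, t.1, t.2.1, t.2.2) := by
    rintro ⟨a, s, y⟩
    exact Finset.sum_eq_single a (fun a' _ h => hoff a a' s y h) (by simp)
  have hH : H2 q = H2 (margXSY q) := by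
    unfold H2
    rw [Fintype.sum_prod_type, Fintype.sum_prod_type]
    refine Finset.sum_congr rfl fun a _ => ?_
    rw [Fintype.sum_prod_type, Finset.sum_eq_single a]
    · refine Finset.sum_congr rfl fun t _ => ?_
      rw [hm]
    · intro a' _ hne
      refine Finset.sum_eq_zero fun t _ => ?_
      rw [hoff a a' t.1 t.2 hne]; simp
    · simp
  unfold infoX'
  rw [hH, hX']; ring

lemma QSet_nonempty
    (W : A → S → Y → ℝ) (hW : ∀ a s, IsDist (W a s))
    (P : A → ℝ) (hP : IsDist P) (pS : S → ℝ) (hpS : IsDist pS) :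
    (QSet P {pS} W).Nonempty := by
  classical
  obtain ⟨q, hq⟩ : ∃ q : A × A × S × Y → ℝ, ∀ a a' s y, q (a, a', s, y) =
      if a = a' then P a * (pS s * W a s y) else 0 :=
    ⟨fun t => if t.1 = t.2.1 then P t.1 * (pS t.2.2.1 * W t.1 t.2.2.1 t.2.2.2) else 0,
      fun _ _ _ _ => rfl⟩
  have hXX'Y : ∀ a a' y, margXX'Y q a a' y =
      if a = a' then P a * ∑ s, pS s * W a s y else 0 := by
    intro a a' y
    simp only [margXX'Y, hq]
    split_ifs <;> simp [Finset.mul_sum]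
  have hVsum : ∀ a, ∑ s, ∑ y, P a * (pS s * W a s y) = P a := by
    intro a
    simp only [← Finset.mul_sum, (hW _ _).2, mul_one, hpS.2]
  have hXX' : ∀ a a', margXX' q a a' = if a = a' then P a else 0 := by
    intro a a'
    simp only [margXX', hq]
    split_ifs
    · exact hVsum a
    · simp
  have hX : margX q = P := by
    funext a
    change ∑ a', margXX' q a a' = P a
    simp [hXX']
  have hX' : margX' q = P := by
    funext a'
    change ∑ a, margXX' q a a' = P a'
    simp [hXX']
  have hXY : ∀ a y, margXY q a y = P a * ∑ s, pS s * W a s y := by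
    intro a y
    change ∑ a', margXX'Y q a a' y = _
    simp [hXX'Y]
  have hX'Y : ∀ a y, margX'Y q a y = P a * ∑ s, pS s * W a s y := by
    intro a y
    change ∑ a', margXX'Y q a' a y = _
    simp [hXX'Y]
  have hS : margS q = pS := by
    funext s
    have : ∀ a, ∑ a', ∑ y, q (a, a', s, y) = P a * pS s := by
      intro a
      rw [Finset.sum_eq_single a]
      · simp only [hq, if_true, ← Finset.mul_sum, (hW _ _).2, mul_one]
      · intro a' _ h
        simp [hq, h.symm]
      · simp
    simp only [margS, this, ← Finset.sum_mul, hP.2, one_mul]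
  refine ⟨q, ⟨?_, ?_⟩, hS, ?_, ⟨pS, rfl, ?_⟩, hX, hX', ?_⟩
  · rintro ⟨a, a', s, y⟩
    rw [hq]
    split_ifs
    · exact mul_nonneg (hP.1 _) (mul_nonneg (hpS.1 _) ((hW _ _).1 _))
    · exact le_rfl
  · rw [← hP.2, ← hX]
    simp only [Fintype.sum_prod_type, margX]
  · intro a y; rw [hXY, hX, hS]
  · intro a y; rw [hX'Y, hX']
  · intro a a' y
    rw [hXX'Y, hX', hXX', hX'Y]
    split_ifs with h
    · subst h; ring
    · simp

end Helpers

/-- If no output distribution `p_S W(·|x)` of the averaged channel is a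
convex combination of the output distributions of the other inputs, then every element of
`Q(P, {p_S}, W)` has `Pr[X' = X] = 1`, and `min_{q ∈ Q} I(X'; X, S, Y) = H(P)`. -/
theorem QSet_of_no_convex_combination
    {A S Y : Type} [Fintype A] [Fintype S] [Fintype Y]
    (W : A → S → Y → ℝ) (hW : ∀ a s, IsDist (W a s))
    (P : A → ℝ) (hP : IsDist P)
    (pS : S → ℝ) (hpS : IsDist pS)
    (hconv : ∀ (a : A) (μ : A → ℝ), (∀ a', 0 ≤ μ a') → μ a = 0 → ∑ a', μ a' = 1 →
      (fun y : Y => ∑ s, pS s * W a s y) ≠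
        (fun y : Y => ∑ a', μ a' * ∑ s, pS s * W a' s y)) :
    (∀ q ∈ QSet P {pS} W, ∑ a, margXX' q a a = 1) ∧
    minInfoX' (QSet P {pS} W) = H2 P := by
  constructor
  · intro q hq
    rw [Finset.sum_congr rfl fun a _ => QSet_diag W P pS hconv q hq a, hP.2]
  · have himg : infoX' '' QSet P {pS} W = {H2 P} := by
      apply Set.eq_singleton_iff_nonempty_unique_mem.2
      refine ⟨(QSet_nonempty W hW P hP pS hpS).image _, ?_⟩
      rintro _ ⟨q, hq, rfl⟩
      have hd := QSet_diag W P pS hconv q hq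
      obtain ⟨⟨hq0, -⟩, -, -, -, hX, hX', -⟩ := hq
      exact QSet_info P q hq0 hX hX' hd
    rw [minInfoX', himg, csInf_singleton]
end

section
/- Let (f, g) be an (M, n, φ, Φ, λ) DI code for a K-MAC W with λ < 1/2 and M_k ≥ 1 for all k. Then for every sender k, (1/n) log₂ M_k ≤ max { H(p) : p ∈ P_n(X_k), ∑_{a ∈ X_k} p(a) φ_k(a) ≤ Φ_k } + (|X_k| log₂(n+1))/n, where the maximum is over n-types on X_k satisfying the expected cost constraint. -/
open scoped BigOperators

open Classical in
theorem sum_comp_empDist {α : Type*} [Fintype α] {n : ℕ} (hn : 0 < n) (x : Fin n → α)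
    (F : α → ℝ) : ∑ i, F (x i) = n * ∑ a, empDist x a * F a := by
  rw [← Finset.sum_fiberwise (s := Finset.univ) (g := x), Finset.mul_sum]
  refine Finset.sum_congr rfl fun a _ => ?_
  have h : ∑ i with x i = a, F (x i) = ∑ i with x i = a, F a :=
    Finset.sum_congr rfl fun i hi => by rw [(Finset.mem_filter.mp hi).2]
  rw [h, Finset.sum_const, nsmul_eq_mul]
  unfold empDist
  have : (n : ℝ) ≠ 0 := by positivity
  field_simp

open Classical in
theorem empDist_pos {α : Type*} [Fintype α] {n : ℕ} (hn : 0 < n) (x : Fin n → α) (i : Fin n) :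
    0 < empDist x (x i) := by
  unfold empDist
  have : 0 < (Finset.univ.filter fun j => x j = x i).card :=
    Finset.card_pos.mpr ⟨i, by simp⟩
  positivity

theorem empDist_sum {α : Type*} [Fintype α] {n : ℕ} (hn : 0 < n) (x : Fin n → α) :
    ∑ a, empDist x a = 1 := by
  have h := sum_comp_empDist hn x (fun _ => 1)
  have : (n : ℝ) ≠ 0 := by positivity
  simp at h
  exact (mul_left_cancel₀ this (by linarith))

theorem empDist_prod {α : Type*} [Fintype α] {n : ℕ} (hn : 0 < n) (x : Fin n → α) :
    ∏ i, empDist x (x i) = (2:ℝ) ^ (-((n:ℝ) * H2 (empDist x))) := by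
  have hpos : 0 < ∏ i, empDist x (x i) := Finset.prod_pos fun i _ => empDist_pos hn x i
  rw [← Real.rpow_logb (b := 2) (by norm_num) (by norm_num) hpos,
    Real.logb_prod _ _ (fun i _ => (empDist_pos hn x i).ne'),
    sum_comp_empDist hn x (fun a => Real.logb 2 (empDist x a))]
  congr 1
  unfold H2
  rw [Finset.sum_neg_distrib]
  ring

open Classical in
theorem H2_nType_nonneg {α : Type*} [Fintype α] {n : ℕ} (x : Fin n → α) :
    0 ≤ H2 (empDist x) := by
  refine Finset.sum_nonneg fun a _ => ?_
  have h0 : 0 ≤ empDist x a := by unfold empDist; positivity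
  have h1 : empDist x a ≤ 1 := by
    unfold empDist
    apply div_le_one_of_le₀ _ (by positivity)
    exact_mod_cast (Finset.card_filter_le _ _).trans (by simp)
  have := Real.logb_nonpos (b := 2) (by norm_num) h0 h1
  nlinarith

open Classical in
theorem count_bound {α : Type*} [Fintype α] {n M : ℕ} (hn : 0 < n)
    (f : Fin M → Fin n → α) (hf : Function.Injective f) (S : ℝ)
    (hS : ∀ m, H2 (empDist (f m)) ≤ S) :
    (M : ℝ) * (2:ℝ) ^ (-((n:ℝ) * S)) ≤ ((n:ℝ) + 1) ^ (Fintype.card α) := by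
  let cnt : (Fin n → α) → α → Fin (n+1) := fun x a =>
    ⟨(Finset.univ.filter fun i => x i = a).card,
      Nat.lt_succ_of_le ((Finset.card_filter_le _ _).trans (by simp))⟩
  have hcnt : ∀ x y, cnt x = cnt y → empDist x = empDist y := by
    intro x y h
    funext a
    have := congrArg Fin.val (congrFun h a)
    simp only [cnt] at this
    unfold empDist
    rw [this]
  calc (M : ℝ) * (2:ℝ) ^ (-((n:ℝ) * S))
      = ∑ m : Fin M, (2:ℝ) ^ (-((n:ℝ) * S)) := by simp
    _ ≤ ∑ m : Fin M, ∏ i, empDist (f m) (f m i) := by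
        refine Finset.sum_le_sum fun m _ => ?_
        rw [empDist_prod hn]
        apply Real.rpow_le_rpow_of_exponent_le (by norm_num)
        have := mul_le_mul_of_nonneg_left (hS m) (Nat.cast_nonneg (α := ℝ) n)
        linarith
    _ = ∑ c : α → Fin (n+1), ∑ m with cnt (f m) = c, ∏ i, empDist (f m) (f m i) := by
        rw [Finset.sum_fiberwise]
    _ ≤ ∑ c : α → Fin (n+1), (1:ℝ) := by
        refine Finset.sum_le_sum fun c _ => ?_
        by_cases hc : ∃ m, cnt (f m) = c
        · obtain ⟨m₀, rfl⟩ := hc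
          calc ∑ m with cnt (f m) = cnt (f m₀), ∏ i, empDist (f m) (f m i)
              = ∑ m with cnt (f m) = cnt (f m₀), ∏ i, empDist (f m₀) (f m i) := by
                refine Finset.sum_congr rfl fun m hm => ?_
                rw [hcnt _ _ (Finset.mem_filter.mp hm).2]
            _ = ∑ x ∈ (Finset.univ.filter fun m => cnt (f m) = cnt (f m₀)).image f,
                  ∏ i, empDist (f m₀) (x i) := by
                rw [Finset.sum_image (fun a _ b _ h => hf h)]
            _ ≤ ∑ x : Fin n → α, ∏ i, empDist (f m₀) (x i) := by
                apply Finset.sum_le_sum_of_subset_of_nonneg (Finset.subset_univ _)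
                intro x _ _
                exact Finset.prod_nonneg fun i _ => by unfold empDist; positivity
            _ = 1 := by
                have := Finset.prod_univ_sum (fun _ : Fin n => (Finset.univ : Finset α))
                  (fun _ a => empDist (f m₀) a)
                rw [Fintype.piFinset_univ] at this
                rw [← this]
                simp [empDist_sum hn]
        · rw [Finset.filter_false_of_mem (fun m _ h => hc ⟨m, h⟩)]
          simp
    _ = ((n:ℝ) + 1) ^ (Fintype.card α) := by simp

theorem macExt_sum {K : ℕ} {X : Fin K → Type*} {Y : Type*} [Fintype Y]
    (W : (∀ k, X k) → Y → ℝ) (hW : ∀ x, IsDist (W x)) (n : ℕ)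
    (x : ∀ k, Fin n → X k) : ∑ y, macExt W n x y = 1 := by
  classical
  have := Finset.prod_univ_sum (fun _ : Fin n => (Finset.univ : Finset Y))
    (fun i a => W (fun k => x k i) a)
  rw [Fintype.piFinset_univ] at this
  unfold macExt
  rw [← this]
  simp [(hW _).2]

theorem enc_injective {K : ℕ} {X : Fin K → Type*} {Y : Type*} [Fintype Y]
    (W : (∀ k, X k) → Y → ℝ) (hW : ∀ x, IsDist (W x))
    (n : ℕ) (M : Fin K → ℕ) (hM : ∀ k, 1 ≤ M k)
    (f : ∀ k, Fin (M k) → Fin n → X k)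
    (g : (∀ k, Fin (M k)) → (Fin n → Y) → Fin K → Bool)
    (lam : ℝ) (hlam : lam < 1/2)
    (h : ∀ k (m m' : ∀ j, Fin (M j)), macErr W n f g k m' m ≤ lam) (k : Fin K) :
    Function.Injective (f k) := by
  intro a b hab
  by_contra hne
  let m0 : ∀ j, Fin (M j) := fun j => ⟨0, hM j⟩
  let m := Function.update m0 k a
  let m' := Function.update m0 k b
  have hfm : (fun j => f j (m j)) = fun j => f j (m' j) := by
    funext j
    by_cases hj : j = k
    · subst hj; simpa [m, m'] using hab
    · simp [m, m', hj]
  have h1 := h k m m'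
  have h2 := h k m' m'
  unfold macErr pr at h1 h2
  have hk : decide (m' k = m k) = false := by simp [m, m', Ne.symm hne]
  rw [hfm, hk] at h1
  have hs := macExt_sum W hW n (fun j => f j (m' j))
  have hadd := add_le_add h1 h2
  rw [← Finset.sum_add_distrib] at hadd
  have : ∀ y, ((if g m' y k ≠ false then macExt W n (fun j => f j (m' j)) y else 0) +
      (if g m' y k ≠ decide (m' k = m' k) then macExt W n (fun j => f j (m' j)) y else 0))
      = macExt W n (fun j => f j (m' j)) y := by
    intro y
    cases g m' y k <;> simp
  have e : ∑ y, macExt W n (fun j => f j (m' j)) y ≤ lam + lam := by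
    refine le_trans (le_of_eq ?_) hadd
    refine Finset.sum_congr rfl fun y _ => ?_
    refine (this y).symm.trans ?_
    congr
  linarith

/-- Converse counting bound: for any `(M, n, φ, Φ, λ)` DI code with
`λ < 1/2`, each rate `(1/n) log₂ M_k` is bounded by the maximal entropy of an `n`-type
satisfying the expected-cost constraint, plus `|X_k| log₂(n+1) / n`. -/
theorem mac_DI_rate_upper_bound
    {K : ℕ} {X : Fin K → Type} [∀ k, Fintype (X k)] {Y : Type} [Fintype Y]
    (W : (∀ k, X k) → Y → ℝ) (hW : ∀ x, IsDist (W x))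
    (n : ℕ) (M : Fin K → ℕ) (hM : ∀ k, 1 ≤ M k)
    (f : ∀ k, Fin (M k) → Fin n → X k)
    (g : (∀ k, Fin (M k)) → (Fin n → Y) → Fin K → Bool)
    (φ : ∀ k, X k → ℝ) (hφ : ∀ k x, 0 ≤ φ k x)
    (Φ : Fin K → ℝ) (hΦ : ∀ k, 0 ≤ Φ k)
    (lam : ℝ) (hlam : lam < 1/2)
    (hcode : IsMACDICode W n f g φ Φ lam) (k : Fin K) :
    (1 / (n:ℝ)) * Real.logb 2 (M k) ≤
      sSup { c : ℝ | ∃ p : X k → ℝ, IsNType n p ∧ (∑ a, p a * φ k a ≤ Φ k) ∧ c = H2 p }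
      + (Fintype.card (X k) : ℝ) * Real.logb 2 ((n:ℝ) + 1) / (n : ℝ) := by
  set T := { c : ℝ | ∃ p : X k → ℝ, IsNType n p ∧ (∑ a, p a * φ k a ≤ Φ k) ∧ c = H2 p } with hT
  rcases Nat.eq_zero_or_pos n with h0 | hn
  · have hnn : 0 ≤ sSup T := by
      apply Real.sSup_nonneg
      rintro c ⟨p, ⟨x, rfl⟩, -, rfl⟩
      exact H2_nType_nonneg x
    have hz : (n : ℝ) = 0 := by exact_mod_cast h0
    simpa [hz] using hnn
  obtain ⟨hcost, herr⟩ := hcode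
  have hn' : (0:ℝ) < n := by exact_mod_cast hn
  have hinj := enc_injective W hW n M hM f g lam hlam herr k
  have hbdd : BddAbove T := by
    have hfin : (Set.range fun x : Fin n → X k => H2 (empDist x)).Finite := Set.finite_range _
    refine hfin.bddAbove.mono ?_
    rintro c ⟨p, ⟨x, rfl⟩, -, rfl⟩
    exact ⟨x, rfl⟩
  have hS : ∀ m, H2 (empDist (f k m)) ≤ sSup T := by
    intro m
    refine le_csSup hbdd ⟨_, ⟨_, rfl⟩, ?_, rfl⟩
    have h := hcost k m
    rw [sum_comp_empDist hn (f k m) (φ k)] at h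
    rwa [← mul_assoc, one_div_mul_cancel hn'.ne', one_mul] at h
  have hc := count_bound hn (f k) hinj (sSup T) hS
  have hMpos : (0:ℝ) < M k := by exact_mod_cast hM k
  have hl := Real.logb_le_logb_of_le (b := 2) (by norm_num) (by positivity) hc
  rw [Real.logb_mul hMpos.ne' (by positivity), Real.logb_rpow (by norm_num) (by norm_num),
    Real.logb_pow] at hl
  have : (1 / (n:ℝ)) * Real.logb 2 (M k) ≤
      (1 / (n:ℝ)) * (n * sSup T + (Fintype.card (X k) : ℝ) * Real.logb 2 ((n:ℝ) + 1)) :=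
    mul_le_mul_of_nonneg_left (by linarith) (by positivity)
  refine this.trans (le_of_eq ?_)
  field_simp
end

section
/- (Arbitrarily large deterministic identification codes under the average-error criterion for a DMC.) Let V : X → P(Y) be a discrete memoryless channel with cost function φ : X → [0,∞) and bound Φ ≥ 0, and suppose the maximal-error DI capacity satisfies C_DI(V, φ, Φ) > 0. Then for every sequence (M_n)_{n∈ℕ} of natural numbers and every λ > 0, there exists, for all sufficiently large n, an (M_n, n, φ, Φ, λ) DIA code for V. -/
open scoped BigOperators

theorem aux_dmc_isDist {X Y : Type} [Fintype X] [Fintype Y]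
    (V : X → Y → ℝ) (hV : ∀ x, IsDist (V x)) (n : ℕ) (x : Fin n → X) :
    IsDist (dmcExt V n x) := by
  classical
  refine ⟨fun y => Finset.prod_nonneg fun i _ => (hV _).1 _, ?_⟩
  unfold dmcExt
  rw [← Fintype.prod_sum fun i y => V (x i) y]
  exact Finset.prod_eq_one fun i _ => (hV _).2

theorem aux_pr_le_one {α : Type*} [Fintype α] (p : α → ℝ) (hp : IsDist p) (A : α → Prop) :
    pr p A ≤ 1 := by
  classical
  rw [← hp.2]
  unfold pr
  refine Finset.sum_le_sum fun x _ => ?_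
  split_ifs
  · exact le_rfl
  · exact hp.1 x

open Classical in
theorem aux_count (M K : ℕ) (hK : 0 < K) (m0 : Fin M) :
    (Finset.univ.filter (fun m : Fin M => m ≠ m0 ∧ m.val % K = m0.val % K)).card
      ≤ (M - 1) / K := by
  have hm0 := m0.isLt
  have hcard : ((Finset.range ((M - 1) / K + 1)).erase (m0.val / K)).card = (M - 1) / K := by
    rw [Finset.card_erase_of_mem, Finset.card_range]
    · rfl
    · rw [Finset.mem_range, Nat.lt_succ_iff]
      exact Nat.div_le_div_right (by omega)
  rw [← hcard]
  refine Finset.card_le_card_of_injOn (fun m => m.val / K) ?_ ?_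
  · intro m hm
    have hm' : m ≠ m0 ∧ m.val % K = m0.val % K := by simpa using hm
    have hlt := m.isLt
    simp only [Finset.coe_erase, Set.mem_diff, Finset.mem_coe, Finset.mem_range,
      Set.mem_singleton_iff]
    refine ⟨?_, ?_⟩
    · rw [Nat.lt_succ_iff]
      exact Nat.div_le_div_right (by omega)
    · intro h
      apply hm'.1
      apply Fin.ext
      rw [← Nat.div_add_mod m.val K, h, hm'.2, Nat.div_add_mod]
  · intro a ha b hb h
    have ha' : a ≠ m0 ∧ a.val % K = m0.val % K := by simpa using ha
    have hb' : b ≠ m0 ∧ b.val % K = m0.val % K := by simpa using hb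
    have h' : a.val / K = b.val / K := h
    apply Fin.ext
    rw [← Nat.div_add_mod a.val K, h', ha'.2, ← hb'.2, Nat.div_add_mod]

/-- If the maximal-error DI capacity of a DMC is positive, then under the
average false-identification error criterion arbitrarily large code-size sequences are
achievable. -/
theorem dmc_DIA_arbitrarily_large_codes
    {X Y : Type} [Fintype X] [Fintype Y]
    (V : X → Y → ℝ) (hV : ∀ x, IsDist (V x))
    (φ : X → ℝ) (hφ : ∀ x, 0 ≤ φ x) (Φ : ℝ) (hΦ : 0 ≤ Φ)
    (hpos : 0 < CDIdmc V φ Φ) :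
    ∀ (Mseq : ℕ → ℕ) (lam : ℝ), 0 < lam → ∃ N : ℕ, ∀ n ≥ N,
      ∃ (f : Fin (Mseq n) → Fin n → X) (g : Fin (Mseq n) → (Fin n → Y) → Bool),
        IsDMCDIACode V f g φ Φ lam := by
  classical
  intro Mseq lam hlam
  obtain ⟨R, ⟨hR0, hR⟩, hRpos⟩ : ∃ R, dmcAchievable V φ Φ R ∧ 0 < R := by
    by_contra! hcon
    exact absurd (Real.sSup_nonpos (fun R hR => hcon R hR)) (not_le.mpr hpos)
  obtain ⟨N1, hN1⟩ := hR (lam / 2) (by positivity)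
  have hb : (1:ℝ) < (2:ℝ) ^ R := Real.one_lt_rpow (by norm_num) hRpos
  obtain ⟨N2, hN2⟩ := Filter.eventually_atTop.1
    ((tendsto_pow_atTop_atTop_of_one_lt hb).eventually_ge_atTop (2 / lam))
  refine ⟨max N1 N2, fun n hn => ?_⟩
  obtain ⟨f, g, hcost, h1, h2⟩ := hN1 n (le_trans (le_max_left _ _) hn)
  have hbig : 2 / lam ≤ (⌈(2:ℝ) ^ ((n:ℝ) * R)⌉₊ : ℝ) := by
    refine le_trans (hN2 n (le_trans (le_max_right _ _) hn)) ?_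
    rw [← Real.rpow_natCast, ← Real.rpow_mul (by norm_num), mul_comm]
    exact Nat.le_ceil _
  have hKr : (0:ℝ) < (⌈(2:ℝ) ^ ((n:ℝ) * R)⌉₊ : ℝ) := lt_of_lt_of_le (by positivity) hbig
  generalize ⌈(2:ℝ) ^ ((n:ℝ) * R)⌉₊ = K at *
  have hK : 0 < K := by exact_mod_cast hKr
  let r : Fin (Mseq n) → Fin K := fun m => ⟨m.val % K, Nat.mod_lt _ hK⟩
  refine ⟨fun m => f (r m), fun m => g (r m), fun m => hcost _, fun m => ?_, fun m0 => ?_⟩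
  · exact (h1 (r m)).trans (by linarith)
  have hcnt := aux_count (Mseq n) K hK m0
  generalize Mseq n = M at *
  have hM : 1 ≤ M := by have := m0.isLt; omega
  have hMr : (0:ℝ) ≤ (M:ℝ) - 1 := by
    have : (1:ℝ) ≤ M := by exact_mod_cast hM
    linarith
  have hbound : (∑ m ∈ Finset.univ.filter (fun m => m ≠ m0),
      pr (dmcExt V n (f (r m))) (fun y => g (r m0) y = true)) ≤ lam * ((M:ℝ) - 1) := by
    have hstep : ∀ m ∈ Finset.univ.filter (fun m : Fin M => m ≠ m0),
        pr (dmcExt V n (f (r m))) (fun y => g (r m0) y = true)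
          ≤ lam / 2 + if m.val % K = m0.val % K then (1:ℝ) else 0 := by
      intro m _
      split_ifs with h
      · have := aux_pr_le_one _ (aux_dmc_isDist V hV n (f (r m))) (fun y => g (r m0) y = true)
        linarith
      · rw [add_zero]
        exact h2 _ _ (fun e => h (congrArg Fin.val e))
    refine (Finset.sum_le_sum hstep).trans ?_
    rw [Finset.sum_add_distrib, Finset.sum_const, ← Finset.sum_filter, Finset.filter_filter,
      Finset.sum_const, nsmul_eq_mul, nsmul_eq_mul, mul_one]
    have hc1 : ((Finset.univ.filter (fun m : Fin M => m ≠ m0)).card : ℝ) = (M:ℝ) - 1 := by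
      rw [Finset.filter_ne', Finset.card_erase_of_mem (Finset.mem_univ _), Finset.card_univ,
        Fintype.card_fin, Nat.cast_sub hM, Nat.cast_one]
    have hc2 : ((Finset.univ.filter
        (fun m : Fin M => m ≠ m0 ∧ m.val % K = m0.val % K)).card : ℝ)
          ≤ ((M:ℝ) - 1) / K := by
      refine le_trans (Nat.cast_le.mpr hcnt) (Nat.cast_div_le.trans ?_)
      rw [Nat.cast_sub hM, Nat.cast_one]
    have hc3 : ((M:ℝ) - 1) / K ≤ ((M:ℝ) - 1) * (lam / 2) := by
      rw [div_le_iff₀ hKr, mul_assoc]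
      have : 1 ≤ lam / 2 * K := by
        rw [div_le_iff₀ hlam] at hbig
        linarith
      nlinarith
    rw [hc1]
    linarith
  rcases hMr.eq_or_lt with h0 | h0
  · rw [← h0, div_zero]; exact hlam.le
  · rw [div_le_iff₀ h0]; exact hbound
end

section
/- Let W : X×S → P(Y) be a channel with finite alphabets, P a distribution on X, and P_S a finite set of distributions on S. For δ ≥ 0 let Q_δ(P, P_S, W) be the set of joint distributions of (X, X′, S, Y) on X×X×S×Y such that the marginal p_S of S lies in P_S, p_{Y|X} = p_S W, there exists p_{S′} ∈ P_S with p_{Y|X′} = p_{S′} W, the marginals of X and X′ both equal P, and I(X; Y | X′, S) ≤ δ. Then (i) Q_δ is nonincreasing in δ and ⋂_{δ>0} Q_δ(P, P_S, W) = Q_0(P, P_S, W), and (ii) if 0 < R < min_{p ∈ Q_0(P, P_S, W)} I(X′; X, S, Y), then there exist α > 0 and δ > 0 such that R < min_{p ∈ Q_δ(P, P_S, W)} I(X′; X, S, Y) − α. -/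
open scoped BigOperators

theorem continuous_H2_aux {α : Type*} [Fintype α] : Continuous (H2 : (α → ℝ) → ℝ) := by
  unfold H2
  refine continuous_finset_sum _ fun x _ => ?_
  have h : Continuous fun t : ℝ => t * Real.log t := Real.continuous_mul_log
  have h2 : Continuous fun p : α → ℝ => -((p x * Real.log (p x)) / Real.log 2) :=
    ((h.comp (continuous_apply x)).div_const _).neg
  convert h2 using 3
  rw [Real.logb, mul_div_assoc]

section JointAux

variable {A S Y : Type*} [Fintype A] [Fintype S] [Fintype Y]

theorem continuous_infoX'_aux : Continuous (infoX' : (A × A × S × Y → ℝ) → ℝ) := by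
  unfold infoX'
  refine ((continuous_H2_aux.comp ?_).add (continuous_H2_aux.comp ?_)).sub continuous_H2_aux
  · unfold margX'; fun_prop
  · unfold margXSY; fun_prop

theorem continuous_condMIXY_aux : Continuous (condMIXY : (A × A × S × Y → ℝ) → ℝ) := by
  unfold condMIXY
  refine (((continuous_H2_aux.comp ?_).add (continuous_H2_aux.comp ?_)).sub
    continuous_H2_aux).sub (continuous_H2_aux.comp ?_)
  · unfold margXX'S; fun_prop
  · unfold margX'SY; fun_prop
  · unfold margX'S; fun_prop

theorem isCompact_QdSet_aux (W : A → S → Y → ℝ) (P : A → ℝ) (PS : Finset (S → ℝ)) (δ : ℝ) :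
    IsCompact (QdSet P (↑PS) W δ) := by
  have hcX : Continuous (margX : (A × A × S × Y → ℝ) → A → ℝ) := by unfold margX; fun_prop
  have hcX' : Continuous (margX' : (A × A × S × Y → ℝ) → A → ℝ) := by unfold margX'; fun_prop
  have hcS : Continuous (margS : (A × A × S × Y → ℝ) → S → ℝ) := by unfold margS; fun_prop
  have hcXY : Continuous (margXY : (A × A × S × Y → ℝ) → A → Y → ℝ) := by
    unfold margXY; fun_prop
  have hcX'Y : Continuous (margX'Y : (A × A × S × Y → ℝ) → A → Y → ℝ) := by
    unfold margX'Y; fun_prop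
  have hcl : IsClosed (QdSet P (↑PS) W δ) := by
    unfold QdSet IsDist
    refine IsClosed.inter (IsClosed.inter ?_ ?_) (IsClosed.inter ?_ (IsClosed.inter ?_
      (IsClosed.inter ?_ (IsClosed.inter ?_ (IsClosed.inter ?_ ?_)))))
    · change IsClosed {q : A × A × S × Y → ℝ | ∀ x, 0 ≤ q x}
      simp only [Set.setOf_forall]
      exact isClosed_iInter fun x => isClosed_le continuous_const (continuous_apply x)
    · exact isClosed_eq (by fun_prop) continuous_const
    · exact PS.finite_toSet.isClosed.preimage hcS
    · change IsClosed {q : A × A × S × Y → ℝ |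
        ∀ a y, margXY q a y = margX q a * ∑ s, margS q s * W a s y}
      simp only [Set.setOf_forall]
      exact isClosed_iInter fun a => isClosed_iInter fun y =>
        isClosed_eq (by fun_prop) (by fun_prop)
    · change IsClosed {q : A × A × S × Y → ℝ | ∃ pS' ∈ (PS : Set (S → ℝ)),
        ∀ a y, margX'Y q a y = margX' q a * ∑ s, pS' s * W a s y}
      have : {q : A × A × S × Y → ℝ | ∃ pS' ∈ (PS : Set (S → ℝ)),
        ∀ a y, margX'Y q a y = margX' q a * ∑ s, pS' s * W a s y} =
        ⋃ pS' ∈ (PS : Set (S → ℝ)), {q : A × A × S × Y → ℝ |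
          ∀ a y, margX'Y q a y = margX' q a * ∑ s, pS' s * W a s y} := by
        ext q; simp
      rw [this]
      refine PS.finite_toSet.isClosed_biUnion fun p _ => ?_
      simp only [Set.setOf_forall]
      exact isClosed_iInter fun a => isClosed_iInter fun y =>
        isClosed_eq (by fun_prop) (by fun_prop)
    · exact isClosed_eq hcX continuous_const
    · exact isClosed_eq hcX' continuous_const
    · exact isClosed_le continuous_condMIXY_aux continuous_const
  refine IsCompact.of_isClosed_subset
    (isCompact_univ_pi (fun _ : A × A × S × Y => isCompact_Icc (a := (0:ℝ)) (b := 1))) hcl ?_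
  rintro q ⟨⟨h0, h1⟩, -⟩ x -
  refine ⟨h0 x, ?_⟩
  rw [← h1]
  exact Finset.single_le_sum (fun i _ => h0 i) (Finset.mem_univ x)

end JointAux

/-- (i) `Q_δ` grows with `δ` and `⋂_{δ > 0} Q_δ = Q_0`;
(ii) if `0 < R < min_{Q_0} I(X'; X, S, Y)`, then there are `α, δ > 0` with
`R < min_{Q_δ} I(X'; X, S, Y) − α`. -/
theorem QdSet_monotone_inter_and_gap
    {A S Y : Type} [Fintype A] [Fintype S] [Fintype Y]
    (W : A → S → Y → ℝ) (hW : ∀ a s, IsDist (W a s))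
    (P : A → ℝ) (hP : IsDist P)
    (PS : Finset (S → ℝ)) (hPS : ∀ p ∈ PS, IsDist p) :
    (∀ δ₁ δ₂ : ℝ, δ₁ ≤ δ₂ → QdSet P (↑PS) W δ₁ ⊆ QdSet P (↑PS) W δ₂) ∧
    (⋂ δ ∈ Set.Ioi (0:ℝ), QdSet P (↑PS) W δ) = QdSet P (↑PS) W 0 ∧
    (∀ R : ℝ, 0 < R → R < minInfoX' (QdSet P (↑PS) W 0) →
      ∃ α > (0:ℝ), ∃ δ > (0:ℝ), R < minInfoX' (QdSet P (↑PS) W δ) - α) := by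
  have hmono : ∀ δ₁ δ₂ : ℝ, δ₁ ≤ δ₂ → QdSet P (↑PS) W δ₁ ⊆ QdSet P (↑PS) W δ₂ := by
    rintro δ₁ δ₂ h q ⟨h1, h2, h3, h4, h5, h6, h7⟩
    exact ⟨h1, h2, h3, h4, h5, h6, h7.trans h⟩
  refine ⟨hmono, ?_, ?_⟩
  · apply Set.Subset.antisymm
    · intro q hq
      simp only [Set.mem_iInter, Set.mem_Ioi] at hq
      obtain ⟨h1, h2, h3, h4, h5, h6, -⟩ := hq 1 one_pos
      refine ⟨h1, h2, h3, h4, h5, h6, ?_⟩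
      refine le_of_forall_pos_le_add fun ε hε => ?_
      obtain ⟨-, -, -, -, -, -, h7⟩ := hq ε hε
      simpa using h7
    · exact Set.subset_iInter₂ fun δ hδ => hmono 0 δ (le_of_lt hδ)
  · intro R hR hRm
    have hne : (QdSet P (↑PS) W 0).Nonempty := by
      by_contra h
      rw [Set.not_nonempty_iff_eq_empty] at h
      rw [h] at hRm
      simp [minInfoX'] at hRm
      linarith
    have hle : ∀ q ∈ QdSet P (↑PS) W 0, minInfoX' (QdSet P (↑PS) W 0) ≤ infoX' q := fun q hq =>
      csInf_le ((isCompact_QdSet_aux W P PS 0).image continuous_infoX'_aux).bddBelow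
        (Set.mem_image_of_mem _ hq)
    obtain ⟨R', hRR', hR'm⟩ := exists_between hRm
    have key : ∃ δ > (0:ℝ), ∀ q ∈ QdSet P (↑PS) W δ, R' ≤ infoX' q := by
      have hK : IsCompact (QdSet P (↑PS) W 1 ∩ {q | infoX' q ≤ R'}) :=
        (isCompact_QdSet_aux W P PS 1).inter_right
          (isClosed_le continuous_infoX'_aux continuous_const)
      rcases Set.eq_empty_or_nonempty (QdSet P (↑PS) W 1 ∩ {q | infoX' q ≤ R'}) with he | hn
      · refine ⟨1, one_pos, fun q hq => ?_⟩
        by_contra hlt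
        have : q ∈ QdSet P (↑PS) W 1 ∩ {q | infoX' q ≤ R'} := ⟨hq, (not_le.1 hlt).le⟩
        rw [he] at this
        exact this
      · obtain ⟨q0, ⟨hq0, hq0R⟩, hmin⟩ := hK.exists_isMinOn hn continuous_condMIXY_aux.continuousOn
        have hc : 0 < condMIXY q0 := by
          by_contra hc
          obtain ⟨h1, h2, h3, h4, h5, h6, -⟩ := hq0
          have := hle q0 ⟨h1, h2, h3, h4, h5, h6, not_lt.1 hc⟩
          exact absurd (this.trans hq0R) (not_le.2 hR'm)
        refine ⟨min 1 (condMIXY q0 / 2), lt_min one_pos (by linarith), fun q hq => ?_⟩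
        by_contra hlt
        have hq1 := hmin ⟨hmono _ 1 (min_le_left _ _) hq, (not_le.1 hlt).le⟩
        have hq2 : condMIXY q ≤ min 1 (condMIXY q0 / 2) := hq.2.2.2.2.2.2
        have hq3 := hq2.trans (min_le_right _ _)
        have hq4 : condMIXY q0 ≤ condMIXY q := hq1
        linarith
    obtain ⟨δ, hδ, hall⟩ := key
    refine ⟨(R' - R) / 2, by linarith, δ, hδ, ?_⟩
    have : R' ≤ minInfoX' (QdSet P (↑PS) W δ) := by
      refine le_csInf ((hne.mono (hmono 0 δ hδ.le)).image _) ?_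
      rintro _ ⟨q, hq, rfl⟩
      exact hall q hq
    linarith
end
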